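/- Let n ≥ 1 and let M be a Hausdorff topological space in which every point has an open neighborhood homeomorphic (as a subspace) to ℝⁿ. Let B : ℕ → Set M be a sequence of subsets such that each B i (with the subspace topology) is homeomorphic to the closed unit ball Metric.closedBall (0 : ℝⁿ) 1 and such that B i ⊆ interior (B (i+1)) (topological interior taken in M) for every i. Then the union ⋃ i, B i, with the subspace topology, is homeomorphic to ℝⁿ. -/

import Mathlib

/-!
On a compact convex body `s`, let `f = id + u` be a `C¹` map with `u = 0` on the frontier. For
small `t` the map `id + t • u` is a bijection of `s`, so the polynomial `t ↦ ∫ det (1 + t • u')`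
equals the volume of `s` for small `t`, hence also for `t = 1`. A retraction onto the frontier has
`det f' = 0`, so there is none. Brouwer's fixed point theorem and invariance of domain follow, and
the interiors of the balls `B i` turn out to be open cells.

By compactness, every compact subset of the union lies in one of these cells. Following M. Brown, an
open embedding `g` of the model space into the union can then be corrected, without changing it on a
given ball, so that the image of a slightly larger ball engulfs a given compact set. Iterating over
growing balls and a compact exhaustion produces a sequence of embeddings that stabilizes locally,
and its limit is a homeomorphism.
-/

section NoRetraction

open MeasureTheory Polynomial Set Topology
open scoped NNReal

theorem bijective_id_add_of_lipschitzWith {E : Type*} [NormedAddCommGroup E] [NormedSpace ℝ E]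
    [CompleteSpace E] {w : E → E} {K : ℝ≥0} (hw : LipschitzWith K w) (hK : K < 1) :
    Function.Bijective fun x => x + w x := by
  have happrox : ApproximatesLinearOn (fun x => x + w x)
      (ContinuousLinearEquiv.refl ℝ E : E →L[ℝ] E) univ K := by
    rw [ApproximatesLinearOn.approximatesLinearOn_iff_lipschitzOnWith]
    convert hw.lipschitzOnWith (s := univ) using 1
    ext x
    simp
  refine (happrox.toHomeomorph _ ?_).bijective
  refine (subsingleton_or_nontrivial E).imp_right fun _ => ?_
  have : NontrivialTopology E := EMetric.nontrivial_iff_nontrivialTopology.1 ‹_›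
  simpa using hK

theorem det_id_add_pos_of_norm_lt_one {E : Type*} [NormedAddCommGroup E] [NormedSpace ℝ E]
    [FiniteDimensional ℝ E] {A : E →L[ℝ] E} (hA : ‖A‖ < 1) :
    0 < (ContinuousLinearMap.id ℝ E + A).det := by
  have : CompleteSpace E := FiniteDimensional.complete ℝ E
  have hne : ∀ t ∈ Icc (0 : ℝ) 1, (ContinuousLinearMap.id ℝ E + t • A).det ≠ 0 := by
    intro t ht hdet
    have htA : ‖t • A‖₊ < 1 := by
      rw [← NNReal.coe_lt_coe, coe_nnnorm, norm_smul, Real.norm_of_nonneg ht.1]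
      exact (mul_le_of_le_one_left (norm_nonneg A) ht.2).trans_lt hA
    exact LinearMap.bot_lt_ker_of_det_eq_zero hdet |>.ne'
      (LinearMap.ker_eq_bot.2 (bijective_id_add_of_lipschitzWith (t • A).lipschitz htA).injective)
  have hcont : Continuous fun t : ℝ => (ContinuousLinearMap.id ℝ E + t • A).det :=
    ContinuousLinearMap.continuous_det.comp (by fun_prop)
  by_contra! hneg
  obtain ⟨t, ht, hdet⟩ := intermediate_value_Icc' zero_le_one hcont.continuousOn
    (show (0 : ℝ) ∈ Icc _ _ by simpa [ContinuousLinearMap.det] using hneg)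
  exact hne t ht hdet

theorem exists_polynomial_eval_eq_det_id_add_smul {R V : Type*} [CommRing R] [Nontrivial R]
    [AddCommGroup V] [Module R V] [Module.Free R V] [Module.Finite R V] (A : V →ₗ[R] V) :
    ∃ P : R[X], P.natDegree ≤ Module.finrank R V ∧
      ∀ t, P.eval t = LinearMap.det (LinearMap.id + t • A) := by
  let b := Module.finBasis R V
  let m := LinearMap.toMatrix b b A
  refine ⟨Matrix.det ((X : R[X]) • m.map C + (1 : Matrix _ _ R).map C), ?_, fun t => ?_⟩
  · simpa using natDegree_det_X_add_C_le m 1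
  · rw [← LinearMap.det_toMatrix b, ← coe_evalRingHom, RingHom.map_det]
    congr 1
    ext i j
    simp [m, add_comm, mul_comm t, Matrix.one_apply, apply_ite (eval t)]

theorem exists_polynomial_eval_eq_integral {α : Type*} [MeasurableSpace α] {μ : Measure α}
    {P : α → ℝ[X]} {d : ℕ} (hdeg : ∀ x, (P x).natDegree ≤ d)
    (hint : ∀ t, Integrable (fun x => (P x).eval t) μ) :
    ∃ Q : ℝ[X], ∀ t, Q.eval t = ∫ x, (P x).eval t ∂μ := by
  let node : ℕ → ℝ := Nat.cast
  let nodes := Finset.range (d + 1)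
  refine ⟨Lagrange.interpolate nodes node fun j => ∫ x, (P x).eval (node j) ∂μ, fun t => ?_⟩
  have hP : ∀ x, (P x).eval t =
      ∑ j ∈ nodes, (P x).eval (node j) * (Lagrange.basis nodes node j).eval t := by
    intro x
    have hlt : (P x).degree < nodes.card := by
      rw [Finset.card_range]
      exact degree_le_natDegree.trans_lt (by exact_mod_cast Nat.lt_succ_of_le (hdeg x))
    conv_lhs => rw [Lagrange.eq_interpolate Nat.cast_injective.injOn hlt]
    simp only [Lagrange.interpolate_apply, eval_finsetSum, eval_mul, eval_C, node]
  simp only [hP, Lagrange.interpolate_apply, eval_finsetSum, eval_mul, eval_C]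
  rw [integral_finsetSum _ fun j _ => (hint _).mul_const _]
  simp only [integral_mul_const]

theorem inter_frontier_nonempty_of_isPreconnected {X : Type*} [TopologicalSpace X] {s t : Set X}
    (ht : IsPreconnected t) (hmeet : (t ∩ s).Nonempty) (hnot : ¬t ⊆ s) :
    (t ∩ frontier s).Nonempty := by
  by_contra! hempty
  have havoid : ∀ z ∈ t, z ∈ closure s → z ∈ interior s := fun z hz hzs =>
    by_contra fun hzi => (hempty ▸ ⟨hz, hzs, hzi⟩ : z ∈ (∅ : Set X))
  obtain ⟨x, hxt, hxs⟩ := hmeet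
  obtain ⟨y, hyt, hys⟩ := not_subset.1 hnot
  obtain ⟨z, -, hz, hz'⟩ := ht (interior s) (closure s)ᶜ
    isOpen_interior isClosed_closure.isOpen_compl
    (fun z hz => (em (z ∈ closure s)).imp_left (havoid z hz))
    ⟨x, hxt, havoid x hxt (subset_closure hxs)⟩
    ⟨y, hyt, fun hy => hys (interior_subset (havoid y hyt hy))⟩
  exact hz' (interior_subset_closure hz)

theorem lipschitzWith_indicator_of_eqOn_zero_frontier {E F : Type*} [NormedAddCommGroup E]
    [NormedSpace ℝ E] [NormedAddCommGroup F] {u : E → F} {s : Set E} {K : ℝ≥0} (hs : IsClosed s)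
    (hu : LipschitzOnWith K u s) (h0 : EqOn u 0 (frontier s)) :
    LipschitzWith K (s.indicator u) := by
  have hcross : ∀ x ∈ s, ∀ y ∉ s, ‖u x‖ ≤ K * dist x y := by
    intro x hx y hy
    obtain ⟨z, hz, hzs⟩ := inter_frontier_nonempty_of_isPreconnected
      (convex_segment (𝕜 := ℝ) x y).isPreconnected ⟨x, left_mem_segment ℝ x y, hx⟩
      fun h => hy (h (right_mem_segment ℝ x y))
    calc ‖u x‖ = dist (u x) (u z) := by rw [h0 hzs, Pi.zero_apply, dist_zero_right]
      _ ≤ K * dist x z := hu.dist_le_mul x hx z (hs.frontier_subset hzs)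
      _ ≤ K * dist x y := by
        gcongr
        linarith [dist_add_dist_of_mem_segment hz, dist_nonneg (x := z) (y := y)]
  refine LipschitzWith.of_dist_le_mul fun x y => ?_
  by_cases hx : x ∈ s <;> by_cases hy : y ∈ s
  · simpa [hx, hy] using hu.dist_le_mul x hx y hy
  · simpa [hx, hy] using hcross x hx y hy
  · simpa [hx, hy, dist_comm] using hcross y hy x hx
  · simp only [indicator_of_notMem hx, indicator_of_notMem hy, dist_self]
    positivity

theorem image_eq_of_bijective_of_eqOn_id_compl {α : Type*} {g : α → α} {s : Set α}
    (hg : Function.Bijective g) (hid : EqOn g id sᶜ) : g '' s = s := by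
  rw [← compl_inj_iff, ← image_compl_eq hg, hid.image_eq, image_id]

theorem det_eq_zero_of_hasStrictFDerivAt_of_interior_eq_empty {E : Type*} [NormedAddCommGroup E]
    [NormedSpace ℝ E] [FiniteDimensional ℝ E] {f : E → E} {f' : E →L[ℝ] E} {x : E} {s : Set E}
    (hf : HasStrictFDerivAt f f' x) (hs : interior s = ∅) (hfs : ∀ᶠ y in 𝓝 x, f y ∈ s) :
    f'.det = 0 := by
  have : CompleteSpace E := FiniteDimensional.complete ℝ E
  by_contra hdet
  have hequiv : HasStrictFDerivAt f
      (f'.toContinuousLinearEquivOfDetNeZero hdet : E →L[ℝ] E) x := by simpa using hf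
  have hmem : s ∈ 𝓝 (f x) := by rw [← hequiv.map_nhds_eq_of_equiv]; exact hfs
  exact (hs ▸ mem_interior_iff_mem_nhds.2 hmem : f x ∈ (∅ : Set E))

section Volume

variable {E : Type*} [NormedAddCommGroup E] [NormedSpace ℝ E] [FiniteDimensional ℝ E]
  [MeasurableSpace E] [BorelSpace E] (μ : Measure E) [μ.IsAddHaarMeasure]

theorem setIntegral_det_id_add_eq_of_image_eq {w : E → E} {A : E → E →L[ℝ] E} {s : Set E}
    (hs : MeasurableSet s) (hw : ∀ x ∈ s, HasFDerivWithinAt w (A x) s x)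
    (hA : ∀ x ∈ s, ‖A x‖ < 1) (hinj : InjOn (fun x => x + w x) s)
    (himage : (fun x => x + w x) '' s = s) :
    ∫ x in s, (ContinuousLinearMap.id ℝ E + A x).det ∂μ = μ.real s := by
  calc ∫ x in s, (ContinuousLinearMap.id ℝ E + A x).det ∂μ
      = ∫ x in s, |(ContinuousLinearMap.id ℝ E + A x).det| • (1 : ℝ) ∂μ := by
        refine setIntegral_congr_fun hs fun x hx => ?_
        simp only [smul_eq_mul, mul_one, abs_of_pos (det_id_add_pos_of_norm_lt_one (hA x hx))]
    _ = ∫ _ in (fun x => x + w x) '' s, (1 : ℝ) ∂μ :=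
        (integral_image_eq_integral_abs_det_fderiv_smul μ hs
          (fun x hx => (hasFDerivWithinAt_id x s).fun_add (hw x hx)) hinj fun _ => 1).symm
    _ = μ.real s := by
        rw [himage, integral_const, measureReal_restrict_apply_univ, smul_eq_mul, mul_one]

theorem setIntegral_det_id_add_fderiv_of_lipschitzOnWith_lt_one {u : E → E} {K : ℝ≥0} {s : Set E}
    (hs : IsClosed s) (hu : LipschitzOnWith K u s) (hK : K < 1)
    (hdiff : ∀ x ∈ interior s, DifferentiableAt ℝ u x) (h0 : EqOn u 0 (frontier s)) :
    ∫ x in interior s, (ContinuousLinearMap.id ℝ E + fderiv ℝ u x).det ∂μ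
      = μ.real (interior s) := by
  have : CompleteSpace E := FiniteDimensional.complete ℝ E
  have hbij := bijective_id_add_of_lipschitzWith
    (lipschitzWith_indicator_of_eqOn_zero_frontier hs hu h0) hK
  have himage : (fun x => x + s.indicator u x) '' interior s = interior s := by
    refine image_eq_of_bijective_of_eqOn_id_compl hbij fun x hx => ?_
    by_cases hxs : x ∈ s
    · simp [h0 (hs.frontier_eq ▸ ⟨hxs, hx⟩ : x ∈ frontier s)]
    · simp [hxs]
  refine setIntegral_det_id_add_eq_of_image_eq μ isOpen_interior.measurableSet (fun x hx => ?_)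
    (fun x hx => ?_) hbij.injective.injOn himage
  · exact (hdiff x hx).hasFDerivAt.hasFDerivWithinAt.congr
      (fun y hy => indicator_of_mem (interior_subset hy) u)
      (indicator_of_mem (interior_subset hx) u)
  · exact (norm_fderiv_le_of_lipschitzOn ℝ (mem_interior_iff_mem_nhds.1 hx) hu).trans_lt
      (by exact_mod_cast hK)

-- The integral is polynomial in the scaling factor `t` of `u`, and constant for small `t`.
theorem setIntegral_det_id_add_fderiv_eq_measureReal {u : E → E} {s : Set E} (hs : IsCompact s)
    (hconv : Convex ℝ s) (hu : ∀ x ∈ s, ContDiffAt ℝ 1 u x) (h0 : EqOn u 0 (frontier s)) :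
    ∫ x in interior s, (ContinuousLinearMap.id ℝ E + fderiv ℝ u x).det ∂μ
      = μ.real (interior s) := by
  have hdiff : ∀ x ∈ s, DifferentiableAt ℝ u x := fun x hx =>
    (hu x hx).differentiableAt one_ne_zero
  have hcont : ContinuousOn (fderiv ℝ u) s := fun x hx =>
    ((hu x hx).continuousAt_fderiv one_ne_zero).continuousWithinAt
  obtain ⟨C, hC⟩ := hs.exists_bound_of_continuousOn hcont
  have hlip : LipschitzOnWith C.toNNReal u s :=
    hconv.lipschitzOnWith_of_nnnorm_fderiv_le hdiff fun x hx => by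
      rw [← NNReal.coe_le_coe]
      exact (hC x hx).trans (Real.le_coe_toNNReal C)
  choose P hPdeg hP using fun x =>
    exists_polynomial_eval_eq_det_id_add_smul (fderiv ℝ u x : E →ₗ[ℝ] E)
  have hPdet : ∀ x t, (P x).eval t = (ContinuousLinearMap.id ℝ E + t • fderiv ℝ u x).det := hP
  obtain ⟨Q, hQ⟩ := exists_polynomial_eval_eq_integral (μ := μ.restrict (interior s)) hPdeg
    fun t => by
      simp only [hPdet]
      exact (ContinuousLinearMap.continuous_det.comp_continuousOn (continuousOn_const.add
        (hcont.const_smul t))).integrableOn_compact hs |>.mono_set interior_subset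
  have hK : (0 : ℝ) < C.toNNReal + 1 := by positivity
  have hsmall : ∀ t ∈ Ioo (0 : ℝ) (1 / (C.toNNReal + 1)), Q.eval t = μ.real (interior s) := by
    intro t ht
    have hlipt : LipschitzOnWith (‖t‖₊ * C.toNNReal) (t • u) s :=
      (lipschitzWith_smul t).comp_lipschitzOnWith hlip
    rw [hQ, ← setIntegral_det_id_add_fderiv_of_lipschitzOnWith_lt_one μ hs.isClosed hlipt ?_
      (fun x hx => (hdiff x (interior_subset hx)).const_smul t) fun x hx => by simp [h0 hx]]
    · refine setIntegral_congr_fun isOpen_interior.measurableSet fun x hx => ?_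
      simp only [hPdet, fderiv_const_smul (hdiff x (interior_subset hx))]
    · rw [← NNReal.coe_lt_coe]
      push_cast
      rw [Real.norm_of_nonneg ht.1.le]
      linarith [(lt_div_iff₀ hK).1 ht.2, ht.1]
  have hQconst : Q = Polynomial.C (μ.real (interior s)) := by
    refine eq_of_infinite_eval_eq _ _ ((Ioo_infinite (one_div_pos.2 hK)).mono fun t ht => ?_)
    simpa using hsmall t ht
  simpa [hPdet, hQconst] using (hQ 1).symm

end Volume

theorem not_exists_contDiffAt_retraction_frontier {E : Type*} [NormedAddCommGroup E]
    [NormedSpace ℝ E] [FiniteDimensional ℝ E] {s : Set E} (hs : IsCompact s) (hconv : Convex ℝ s)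
    (hne : (interior s).Nonempty) :
    ¬∃ f : E → E, (∀ x ∈ s, ContDiffAt ℝ 1 f x) ∧ MapsTo f s (frontier s) ∧
      EqOn f id (frontier s) := by
  borelize E
  rintro ⟨f, hf, hmaps, hid⟩
  have hdet : ∀ x ∈ interior s,
      (ContinuousLinearMap.id ℝ E + fderiv ℝ (fun y => f y - y) x).det = 0 := by
    intro x hx
    have hfx := hf x (interior_subset hx)
    rw [fderiv_fun_sub (hfx.differentiableAt one_ne_zero) differentiableAt_fun_id, fderiv_fun_id,
      add_sub_cancel]
    exact det_eq_zero_of_hasStrictFDerivAt_of_interior_eq_empty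
      (hfx.hasStrictFDerivAt one_ne_zero) (interior_frontier hs.isClosed)
      (Filter.mem_of_superset (mem_interior_iff_mem_nhds.1 hx) hmaps)
  have hvol := setIntegral_det_id_add_fderiv_eq_measureReal Measure.addHaar hs hconv
    (u := fun y => f y - y) (fun x hx => (hf x hx).sub contDiffAt_id) fun x hx => by simp [hid hx]
  rw [setIntegral_congr_fun isOpen_interior.measurableSet hdet, integral_zero] at hvol
  exact (ENNReal.toReal_pos ((isOpen_interior.measure_pos _ hne).ne')
    (hs.measure_lt_top.trans_le' (measure_mono interior_subset) |>.ne)).ne hvol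

end NoRetraction

section Brouwer

open Metric Set
open scoped RealInnerProductSpace

variable {E : Type*} [NormedAddCommGroup E] [InnerProductSpace ℝ E]

/-- The time at which the ray from `x` in direction `v` leaves the closed unit ball, for `‖x‖ ≤ 1`
and `v ≠ 0`: the larger root `t` of `‖x + t • v‖ ^ 2 = 1`. -/
noncomputable def rayExitTime (x v : E) : ℝ :=
  (-⟪x, v⟫ + √(⟪x, v⟫ ^ 2 + ‖v‖ ^ 2 * (1 - ‖x‖ ^ 2))) / ‖v‖ ^ 2

theorem rayExitTime_eq_zero {x v : E} (hx : ‖x‖ = 1) (hv : 0 ≤ ⟪x, v⟫) : rayExitTime x v = 0 := by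
  simp [rayExitTime, hx, Real.sqrt_sq hv]

theorem norm_add_rayExitTime_smul {x v : E} (hx : ‖x‖ ≤ 1) (hv : v ≠ 0) :
    ‖x + rayExitTime x v • v‖ = 1 := by
  have hv' : ‖v‖ ≠ 0 := norm_ne_zero_iff.2 hv
  have hdisc : 0 ≤ ⟪x, v⟫ ^ 2 + ‖v‖ ^ 2 * (1 - ‖x‖ ^ 2) := by
    have : ‖x‖ ^ 2 ≤ 1 := pow_le_one₀ (norm_nonneg x) hx
    nlinarith [sq_nonneg ⟪x, v⟫, sq_nonneg ‖v‖]
  have hroot : (rayExitTime x v * ‖v‖ ^ 2 + ⟪x, v⟫) ^ 2 =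
      ⟪x, v⟫ ^ 2 + ‖v‖ ^ 2 * (1 - ‖x‖ ^ 2) := by
    rw [rayExitTime, div_mul_cancel₀ _ (pow_ne_zero 2 hv'), neg_add_cancel_comm, Real.sq_sqrt hdisc]
  refine (pow_left_inj₀ (norm_nonneg _) zero_le_one two_ne_zero).1
    (mul_left_cancel₀ (pow_ne_zero 2 hv') ?_)
  rw [norm_add_sq_real, inner_smul_right, norm_smul, mul_pow, Real.norm_eq_abs, sq_abs]
  linear_combination hroot

theorem contDiffAt_rayExitTime {u v : E → E} {x : E} {n : WithTop ℕ∞} (hu : ContDiffAt ℝ n u x)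
    (hv : ContDiffAt ℝ n v x) (hux : ‖u x‖ ≤ 1) (hvx : v x ≠ 0)
    (hout : ‖u x‖ = 1 → ⟪u x, v x⟫ ≠ 0) :
    ContDiffAt ℝ n (fun y => rayExitTime (u y) (v y)) x := by
  have hv' : 0 < ‖v x‖ ^ 2 := pow_pos (norm_pos_iff.2 hvx) 2
  have hdisc : 0 < ⟪u x, v x⟫ ^ 2 + ‖v x‖ ^ 2 * (1 - ‖u x‖ ^ 2) := by
    rcases hux.lt_or_eq with hlt | heq
    · have : 0 < 1 - ‖u x‖ ^ 2 := sub_pos.2 (pow_lt_one₀ (norm_nonneg _) hlt two_ne_zero)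
      exact add_pos_of_nonneg_of_pos (sq_nonneg _) (mul_pos hv' this)
    · simpa [heq, sq_pos_iff] using hout heq
  have hinner : ContDiffAt ℝ n (fun y => ⟪u y, v y⟫) x := hu.inner ℝ hv
  exact (hinner.neg.add (ContDiffAt.sqrt ((hinner.pow 2).add ((hv.norm_sq ℝ).mul
    (contDiffAt_const.sub (hu.norm_sq ℝ)))) hdisc.ne')).div (hv.norm_sq ℝ) hv'.ne'

variable [FiniteDimensional ℝ E]

theorem exists_eq_self_of_contDiff_of_mapsTo_ball {p : E → E} (hp : ContDiff ℝ 1 p)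
    (hmaps : MapsTo p (closedBall 0 1) (ball 0 1)) : ∃ x ∈ closedBall (0 : E) 1, p x = x := by
  by_contra! hne
  have hE : (interior (closedBall (0 : E) 1)).Nonempty :=
    ⟨0, ball_subset_interior_closedBall (mem_ball_self one_pos)⟩
  have hv : ∀ x ∈ closedBall (0 : E) 1, x - p x ≠ 0 := fun x hx =>
    sub_ne_zero.2 (hne x hx).symm
  have hout : ∀ x ∈ closedBall (0 : E) 1, ‖x‖ = 1 → 0 < ⟪x, x - p x⟫ := by
    intro x hx hx1
    have hpx : ‖p x‖ < 1 := mem_ball_zero_iff.1 (hmaps hx)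
    have := real_inner_le_norm x (p x)
    rw [inner_sub_right, real_inner_self_eq_norm_sq]
    rw [hx1] at this ⊢
    linarith
  refine not_exists_contDiffAt_retraction_frontier (isCompact_closedBall 0 1)
    (convex_closedBall (0 : E) 1) hE
    ⟨fun x => x + rayExitTime x (x - p x) • (x - p x), fun x hx => ?_, fun x hx => ?_,
      fun x hx => ?_⟩
  · have hvx : ContDiffAt ℝ 1 (fun y => y - p y) x := (contDiff_id.sub hp).contDiffAt
    exact contDiffAt_id.add ((contDiffAt_rayExitTime contDiffAt_id hvx
      (mem_closedBall_zero_iff.1 hx) (hv x hx) fun h => (hout x hx h).ne').smul hvx)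
  · rw [frontier_closedBall _ one_ne_zero, mem_sphere_zero_iff_norm]
    exact norm_add_rayExitTime_smul (mem_closedBall_zero_iff.1 hx) (hv x hx)
  · rw [frontier_closedBall _ one_ne_zero] at hx
    have hx1 := mem_sphere_zero_iff_norm.1 hx
    simp only [id_eq,
      rayExitTime_eq_zero hx1 (hout x (sphere_subset_closedBall hx) hx1).le, zero_smul, add_zero]

theorem exists_eq_self_of_continuousOn_of_mapsTo_closedBall {f : E → E}
    (hf : ContinuousOn f (closedBall 0 1)) (hmaps : MapsTo f (closedBall 0 1) (closedBall 0 1)) :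
    ∃ x ∈ closedBall (0 : E) 1, f x = x := by
  by_contra! hne
  obtain ⟨F, hF⟩ := ContinuousMap.exists_restrict_eq (Y := E) isClosed_closedBall
    ⟨_, hf.domRestrict⟩
  have hFf : EqOn F f (closedBall 0 1) := fun x hx => DFunLike.congr_fun hF ⟨x, hx⟩
  obtain ⟨μ, hμ, hmove⟩ := (isCompact_closedBall (0 : E) 1).exists_forall_le'
    (f := fun x => ‖F x - x‖) (a := 0) (by fun_prop)
    fun x hx => norm_pos_iff.2 (sub_ne_zero.2 (hFf hx ▸ hne x hx))
  obtain ⟨ε, hε, hεμ⟩ : ∃ ε > 0, ε + ε = μ := ⟨μ / 2, half_pos hμ, add_halves μ⟩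
  obtain ⟨p, hp, hpF, -⟩ := F.continuous.exists_contDiff_approx 1
    (ε := fun _ => ε) continuous_const fun _ => hε
  obtain ⟨x, hx, hpx⟩ := exists_eq_self_of_contDiff_of_mapsTo_ball
    (p := fun x => (1 + ε)⁻¹ • p x) (contDiff_const.smul hp) fun x hx => by
      have hFx : ‖F x‖ ≤ 1 := mem_closedBall_zero_iff.1 (hFf hx ▸ hmaps hx)
      have := norm_le_norm_add_norm_sub' (p x) (F x)
      rw [mem_ball_zero_iff, norm_smul, norm_inv, Real.norm_of_nonneg (by positivity),
        inv_mul_lt_iff₀ (by positivity)]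
      linarith [dist_eq_norm (p x) (F x) ▸ hpF x]
  have hpx' : p x = x + ε • x := by
    rw [inv_smul_eq_iff₀ (by positivity)] at hpx
    rw [hpx, add_smul, one_smul]
  have : ‖F x - x‖ < μ := calc
    ‖F x - x‖ = ‖ε • x - (p x - F x)‖ := by rw [hpx']; congr 1; abel
    _ ≤ ‖ε • x‖ + ‖p x - F x‖ := norm_sub_le _ _
    _ < ε + ε := by
      rw [norm_smul, Real.norm_of_nonneg hε.le, ← dist_eq_norm]
      exact add_lt_add_of_le_of_lt
        (mul_le_of_le_one_right hε.le (mem_closedBall_zero_iff.1 hx)) (hpF x)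
    _ = μ := hεμ
  exact this.not_ge (hmove x hx)

theorem exists_eq_zero_of_norm_sub_self_le_one {f : E → E} (hf : ContinuousOn f (closedBall 0 1))
    (hclose : ∀ x ∈ closedBall (0 : E) 1, ‖f x - x‖ ≤ 1) : ∃ x ∈ closedBall (0 : E) 1, f x = 0 := by
  obtain ⟨x, hx, hfx⟩ := exists_eq_self_of_continuousOn_of_mapsTo_closedBall
    (continuousOn_id.sub hf) fun x hx => by
      simpa [norm_sub_rev] using hclose x hx
  exact ⟨x, hx, by simpa using hfx⟩

end Brouwer

section InvarianceOfDomain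

open MeasureTheory Metric Set Topology

/-- The radial map that pushes the punctured ball of radius `ε` about `c` out to its boundary
sphere and fixes every point outside that ball. -/
noncomputable def pushOut {E : Type*} [NormedAddCommGroup E] [NormedSpace ℝ E] (c : E) (ε : ℝ)
    (y : E) : E :=
  c + max (ε / ‖y - c‖) 1 • (y - c)

section NormedSpace

variable {E : Type*} [NormedAddCommGroup E] [NormedSpace ℝ E] {c y : E} {ε : ℝ}

theorem pushOut_of_le_norm_sub (hy : ε ≤ ‖y - c‖) : pushOut c ε y = y := by
  rw [pushOut, max_eq_right (div_le_one_of_le₀ hy (norm_nonneg _)), one_smul, add_sub_cancel]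

theorem norm_pushOut_sub_of_norm_sub_le (hyc : y ≠ c) (hy : ‖y - c‖ ≤ ε) :
    ‖pushOut c ε y - c‖ = ε := by
  have hpos : 0 < ‖y - c‖ := norm_sub_pos_iff.2 hyc
  rw [pushOut, max_eq_left ((one_le_div hpos).2 hy), add_sub_cancel_left, norm_smul,
    Real.norm_of_nonneg (div_nonneg (hpos.le.trans hy) hpos.le), div_mul_cancel₀ _ hpos.ne']

theorem continuousOn_pushOut : ContinuousOn (pushOut c ε) {c}ᶜ := by
  have hdiv : ContinuousOn (fun y => ε / ‖y - c‖) {c}ᶜ :=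
    continuousOn_const.div (by fun_prop) fun y hy => norm_ne_zero_iff.2 (sub_ne_zero.2 hy)
  exact continuousOn_const.add ((hdiv.sup continuousOn_const).smul (by fun_prop))

variable [FiniteDimensional ℝ E]

-- A smooth approximation maps null sets to null sets, so it misses almost every small vector.
theorem exists_continuous_dist_lt_forall_mem_ne_zero [MeasurableSpace E] [BorelSpace E]
    (μ : Measure E) [μ.IsAddHaarMeasure] {G : E → E} (hG : Continuous G) {s : Set E}
    (hs : μ s = 0) {δ : ℝ} (hδ : 0 < δ) :
    ∃ q : E → E, Continuous q ∧ (∀ y, dist (q y) (G y) < δ) ∧ ∀ y ∈ s, q y ≠ 0 := by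
  obtain ⟨p, hp, hpG, -⟩ := hG.exists_contDiff_approx 1
    (ε := fun _ => δ / 2) continuous_const fun _ => half_pos hδ
  have hnull : μ (p '' s) = 0 := addHaar_image_eq_zero_of_differentiableOn_of_addHaar_eq_zero μ
    (hp.differentiable one_ne_zero).differentiableOn hs
  obtain ⟨v, hv, hvp⟩ : ∃ v ∈ ball (0 : E) (δ / 2), v ∉ p '' s := by
    by_contra! hsub
    exact (measure_ball_pos μ (0 : E) (half_pos hδ)).ne' (measure_mono_null hsub hnull)
  refine ⟨fun y => p y - v, hp.continuous.sub continuous_const, fun y => ?_,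
    fun y hy h => hvp ⟨y, hy, sub_eq_zero.1 h⟩⟩
  calc dist (p y - v) (G y) ≤ dist (p y - v) (p y) + dist (p y) (G y) := dist_triangle _ _ _
    _ < δ / 2 + δ / 2 := by
      rw [dist_self_sub_left]
      exact add_lt_add (mem_ball_zero_iff.1 hv) (hpG y)
    _ = δ := add_halves δ

theorem exists_continuousOn_ne_zero_of_notMem_interior {G : E → E} (hG : Continuous G)
    {s : Set E} (hs : IsCompact s) {y₀ : E} (hy₀ : y₀ ∉ interior s)
    (hzero : ∀ y ∈ s, G y = 0 → y = y₀) {η : ℝ} (hη : 0 < η) :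
    ∃ H : E → E, ContinuousOn H s ∧ ∀ y ∈ s, H y ≠ 0 ∧ dist (H y) (G y) ≤ η := by
  borelize E
  obtain ⟨ε, hε, hosc⟩ : ∃ ε > 0, ∀ y, dist y y₀ < ε + ε → dist (G y) (G y₀) < η / 4 := by
    obtain ⟨r, hr, hball⟩ := Metric.continuous_iff.1 hG y₀ (η / 4) (by positivity)
    exact ⟨r / 2, half_pos hr, by simpa only [add_halves] using hball⟩
  obtain ⟨c, hc, hcs⟩ : ∃ c ∈ ball y₀ ε, c ∉ s := by
    by_contra! hsub
    exact hy₀ (mem_interior_iff_mem_nhds.2 (Filter.mem_of_superset (ball_mem_nhds y₀ hε) hsub))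
  obtain ⟨δ₀, hδ₀, hlow⟩ := (hs.inter_right (isClosed_le continuous_const (by fun_prop) :
      IsClosed {y | ε ≤ ‖y - c‖})).exists_forall_le' (f := fun y => ‖G y‖) (a := 0)
    (by fun_prop) fun y hy => norm_pos_iff.2 fun h => by
      rw [hzero y hy.1 h, mem_inter_iff, mem_ofPred_eq, ← dist_eq_norm'] at hy
      exact hy.2.not_gt hc
  obtain ⟨q, hqc, hqG, hqs⟩ := exists_continuous_dist_lt_forall_mem_ne_zero Measure.addHaar hG
    (Measure.addHaar_sphere_of_ne_zero Measure.addHaar c hε.ne')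
    (lt_min hδ₀ (half_pos hη))
  refine ⟨q ∘ pushOut c ε, hqc.comp_continuousOn
    (continuousOn_pushOut.mono fun y hy => ne_of_mem_of_not_mem hy hcs), fun y hy => ?_⟩
  rw [Function.comp_apply]
  rcases le_or_gt ε ‖y - c‖ with hfar | hnear
  · rw [pushOut_of_le_norm_sub hfar]
    refine ⟨fun h => ?_, ((hqG y).le.trans (min_le_right _ _)).trans (half_le_self hη.le)⟩
    have := (hqG y).trans_le (min_le_left _ _)
    rw [h, dist_zero_left] at this
    exact this.not_ge (hlow y ⟨hy, hfar⟩)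
  · have hsphere := norm_pushOut_sub_of_norm_sub_le (ne_of_mem_of_not_mem hy hcs) hnear.le
    refine ⟨hqs _ (mem_sphere_iff_norm.2 hsphere), ?_⟩
    have hclose : ∀ z, ‖z - c‖ ≤ ε → dist (G z) (G y₀) < η / 4 := fun z hz =>
      hosc z ((dist_triangle z c y₀).trans_lt (add_lt_add_of_le_of_lt (dist_eq_norm z c ▸ hz) hc))
    calc dist (q (pushOut c ε y)) (G y)
        ≤ dist (q (pushOut c ε y)) (G (pushOut c ε y)) + dist (G (pushOut c ε y)) (G y) :=
          dist_triangle _ _ _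
      _ ≤ η / 2 + (η / 4 + η / 4) := add_le_add ((hqG _).le.trans (min_le_right _ _))
          ((dist_triangle_right _ _ (G y₀)).trans
            (add_le_add (hclose _ hsphere.le).le (hclose y hnear.le).le))
      _ = η := by ring

end NormedSpace

-- If `f 0` were not interior, a continuous inverse of `f` could be perturbed on the image to have
-- no zero, contradicting Brouwer.
theorem map_zero_mem_interior_image_closedBall {E : Type*} [NormedAddCommGroup E]
    [InnerProductSpace ℝ E] [FiniteDimensional ℝ E] {f : E → E}
    (hf : ContinuousOn f (closedBall 0 1)) (hinj : InjOn f (closedBall 0 1)) :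
    f 0 ∈ interior (f '' closedBall 0 1) := by
  by_contra hint
  have hball : IsCompact (closedBall (0 : E) 1) := isCompact_closedBall 0 1
  have : CompactSpace (closedBall (0 : E) 1) := isCompact_iff_compactSpace.1 hball
  obtain ⟨G, hG⟩ := ContinuousMap.exists_extension' (Y := E)
    (hf.domRestrict.isClosedEmbedding (injOn_iff_injective.1 hinj)) ⟨_, continuous_subtype_val⟩
  have hGf : ∀ x ∈ closedBall (0 : E) 1, G (f x) = x := fun x hx => congrFun hG ⟨x, hx⟩
  obtain ⟨H, hH, hHG⟩ := exists_continuousOn_ne_zero_of_notMem_interior G.continuous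
    (hball.image_of_continuousOn hf) hint
    (by rintro _ ⟨x, hx, rfl⟩ h; rw [← hGf x hx, h]) one_pos
  obtain ⟨x, hx, hHx⟩ := exists_eq_zero_of_norm_sub_self_le_one
    (hH.comp hf (mapsTo_image _ _)) fun x hx => by
      rw [← dist_eq_norm, Function.comp_apply]
      simpa only [hGf x hx] using (hHG _ (mem_image_of_mem f hx)).2
  exact (hHG _ (mem_image_of_mem f hx)).1 hHx

theorem isOpen_image_of_continuousOn_of_injOn {E : Type*} [NormedAddCommGroup E] [NormedSpace ℝ E]
    [FiniteDimensional ℝ E] {f : E → E} {U : Set E} (hU : IsOpen U) (hf : ContinuousOn f U)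
    (hinj : InjOn f U) : IsOpen (f '' U) := by
  refine isOpen_iff_mem_nhds.2 (forall_mem_image.2 fun x hx => ?_)
  let e := toEuclidean (E := E)
  have hnhds : e.symm ⁻¹' U ∈ 𝓝 (e x) :=
    (hU.preimage e.symm.continuous).mem_nhds (by simpa using hx)
  obtain ⟨r, hr, hrU⟩ := nhds_basis_closedBall.mem_iff.1 hnhds
  let a := fun y => e.symm (e x + r • y)
  have ha : MapsTo a (closedBall 0 1) U := fun y hy => hrU <| by
    rw [mem_closedBall_zero_iff] at hy
    rw [mem_closedBall_iff_norm, add_sub_cancel_left, norm_smul, Real.norm_of_nonneg hr.le]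
    exact mul_le_of_le_one_right hr.le hy
  have ha_inj : Function.Injective a :=
    e.symm.injective.comp ((add_right_injective _).comp (smul_right_injective _ hr.ne'))
  have hint := map_zero_mem_interior_image_closedBall (f := e ∘ f ∘ a)
    (e.continuous.comp_continuousOn (hf.comp (by fun_prop) ha))
    (e.injective.comp_injOn (hinj.comp ha_inj.injOn ha))
  have hmem : (e ∘ f ∘ a) '' closedBall 0 1 ∈ 𝓝 (e (f x)) := by
    simpa [a] using mem_interior_iff_mem_nhds.1 hint
  filter_upwards [e.continuous.continuousAt.preimage_mem_nhds hmem] with _ ⟨y, hy, hey⟩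
  exact ⟨a y, ha hy, e.injective hey⟩

variable (E : Type*) [NormedAddCommGroup E] [NormedSpace ℝ E] [FiniteDimensional ℝ E]
  {M : Type*} [TopologicalSpace M] [ChartedSpace E M]

theorem isOpenEmbedding_of_continuous_of_injective {N : Type*} [TopologicalSpace N]
    [ChartedSpace E N] {f : N → M} (hf : Continuous f) (hinj : Function.Injective f) :
    IsOpenEmbedding f := by
  refine .of_continuous_injective_isOpenMap hf hinj (IsOpenMap.of_nhds_le fun x => ?_)
  refine Filter.le_map fun U hU => ?_
  obtain ⟨W, hWU, hW, hxW⟩ := mem_nhds_iff.1 hU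
  let φ := chartAt E x
  let ψ := chartAt E (f x)
  let V := φ.target ∩ φ.symm ⁻¹' (W ∩ f ⁻¹' ψ.source)
  have hV : IsOpen V := φ.isOpen_inter_preimage_symm (hW.inter (ψ.open_source.preimage hf))
  have hfV : MapsTo (f ∘ φ.symm) V ψ.source := fun _ hy => hy.2.2
  have hopen : IsOpen ((ψ ∘ f ∘ φ.symm) '' V) := isOpen_image_of_continuousOn_of_injOn hV
    (ψ.continuousOn.comp (hf.comp_continuousOn (φ.continuousOn_symm.mono inter_subset_left)) hfV)
    (ψ.injOn.comp (hinj.comp_injOn (φ.symm.injOn.mono inter_subset_left)) hfV)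
  rw [image_comp] at hopen
  have hopen' := ψ.isOpen_image_symm_of_subset_target hopen
    ((image_mono hfV.image_subset).trans ψ.image_source_eq_target.subset)
  rw [(ψ.leftInvOn.mono hfV.image_subset).image_image] at hopen'
  refine Filter.mem_of_superset (hopen'.mem_nhds ?_) ?_
  · refine ⟨φ x, ⟨mem_chart_target E x, ?_⟩, ?_⟩
    · simpa [φ, ψ] using hxW
    · simp [φ]
  · rintro _ ⟨y, hy, rfl⟩
    exact mem_image_of_mem f (hWU hy.2.1)

theorem exists_isOpenEmbedding_range_eq_interior {B : Set M}
    (κ : B ≃ₜ closedBall (0 : E) 1) : ∃ h : E → M, IsOpenEmbedding h ∧ range h = interior B := by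
  let ι : E → B := κ.symm ∘ inclusion ball_subset_closedBall ∘ Homeomorph.unitBall
  have hι : Continuous ι := by fun_prop
  have hι_inj : Function.Injective ι := κ.symm.injective.comp
    ((inclusion_injective _).comp Homeomorph.unitBall.injective)
  have hopen : IsOpenEmbedding (Subtype.val ∘ ι) := isOpenEmbedding_of_continuous_of_injective E
    (continuous_subtype_val.comp hι) (Subtype.val_injective.comp hι_inj)
  refine ⟨_, hopen, (interior_maximal ?_ hopen.isOpen_range).antisymm fun x hx => ?_⟩
  · rintro _ ⟨y, rfl⟩
    exact (ι y).2
  · let U : TopologicalSpace.Opens M := ⟨interior B, isOpen_interior⟩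
    let j : U → E := Subtype.val ∘ κ ∘ inclusion interior_subset
    have hj : IsOpenEmbedding j := isOpenEmbedding_of_continuous_of_injective E
      (by fun_prop) (Subtype.val_injective.comp (κ.injective.comp (inclusion_injective _)))
    have hjx : j ⟨x, hx⟩ ∈ ball (0 : E) 1 := by
      rw [← interior_closedBall _ one_ne_zero]
      refine interior_maximal ?_ hj.isOpen_range (mem_range_self _)
      rintro _ ⟨y, rfl⟩
      exact (κ _).2
    refine ⟨Homeomorph.unitBall.symm ⟨_, hjx⟩, ?_⟩
    simp only [ι, Function.comp_apply, Homeomorph.apply_symm_apply]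
    exact congrArg Subtype.val (κ.symm_apply_apply ⟨x, interior_subset hx⟩)

end InvarianceOfDomain

section MonotoneUnion

open Filter Metric Set Topology

section Radial

variable {E : Type*} [NormedAddCommGroup E] [NormedSpace ℝ E] {s t : ℝ → ℝ} {x : E}

/-- The map of a normed space that keeps every ray from the origin and changes the norm of each
vector according to `t`. -/
noncomputable def radialMap (t : ℝ → ℝ) (x : E) : E :=
  (t ‖x‖ / ‖x‖) • x

theorem radialMap_eq_self (ht : t ‖x‖ = ‖x‖) : radialMap t x = x := by
  rcases eq_or_ne x 0 with rfl | hx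
  · simp [radialMap]
  · rw [radialMap, ht, div_self (norm_ne_zero_iff.2 hx), one_smul]

theorem norm_radialMap (ht : t 0 = 0) : ‖radialMap t x‖ = |t ‖x‖| := by
  rcases eq_or_ne x 0 with rfl | hx
  · simp [radialMap, ht]
  · rw [radialMap, norm_smul, norm_div, norm_norm, Real.norm_eq_abs,
      div_mul_cancel₀ _ (norm_ne_zero_iff.2 hx)]

theorem radialMap_radialMap (hs : s 0 = 0) (ht : t 0 = 0) (hpos : 0 ≤ t ‖x‖) :
    radialMap s (radialMap t x) = radialMap (s ∘ t) x := by
  rw [radialMap, norm_radialMap ht, abs_of_nonneg hpos, radialMap, radialMap, smul_smul,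
    Function.comp_apply]
  rcases eq_or_ne (t ‖x‖) 0 with h0 | h0
  · simp [h0, hs]
  · rw [div_mul_div_cancel₀ h0]

theorem continuous_radialMap (ht : Continuous t) (h0 : t 0 = 0) :
    Continuous (radialMap t : E → E) := by
  refine continuous_iff_continuousAt.2 fun x => ?_
  rcases eq_or_ne x 0 with rfl | hx
  · rw [ContinuousAt, show radialMap t (0 : E) = 0 from smul_zero _,
      tendsto_zero_iff_norm_tendsto_zero]
    simp_rw [norm_radialMap h0]
    exact (by fun_prop : Continuous fun x : E => |t ‖x‖|).tendsto' 0 0 (by simp [h0])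
  · exact ((ht.comp continuous_norm).continuousAt.div continuous_norm.continuousAt
      (norm_ne_zero_iff.2 hx)).smul continuousAt_id

/-- The self-homeomorphism `radialMap t` of a normed space, for `t` an increasing bijection of the
line fixing `0`. -/
noncomputable def radialHomeomorph (t : ℝ ≃o ℝ) (ht : t 0 = 0) : E ≃ₜ E where
  toFun := radialMap t
  invFun := radialMap t.symm
  left_inv x := by
    rw [radialMap_radialMap ((t.symm_apply_eq).2 ht.symm) ht (ht ▸ t.monotone (norm_nonneg x))]
    exact radialMap_eq_self (t.symm_apply_apply _)
  right_inv x := by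
    have ht' : t.symm 0 = 0 := (t.symm_apply_eq).2 ht.symm
    rw [radialMap_radialMap ht ht' (ht' ▸ t.symm.monotone (norm_nonneg x))]
    exact radialMap_eq_self (t.apply_symm_apply _)
  continuous_toFun := continuous_radialMap t.continuous ht
  continuous_invFun := continuous_radialMap t.symm.continuous ((t.symm_apply_eq).2 ht.symm)

theorem exists_orderIso_apply_eq_of_le {e a b c : ℝ} (hea : e < a) (hab : a ≤ b) (hbc : b < c) :
    ∃ t : ℝ ≃o ℝ, EqOn t id (Iic e) ∧ t a = b ∧ EqOn t id (Ici c) := by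
  obtain ⟨k, hk, hka⟩ : ∃ k ≥ 1, k * (a - e) = b - e :=
    ⟨(b - e) / (a - e), (one_le_div (by linarith)).2 (by linarith),
      div_mul_cancel₀ _ (by linarith)⟩
  obtain ⟨l, hl0, hl1, hla⟩ : ∃ l, 0 < l ∧ l ≤ 1 ∧ l * (c - a) = c - b :=
    ⟨(c - b) / (c - a), div_pos (by linarith) (by linarith),
      (div_le_one (by linarith)).2 (by linarith), div_mul_cancel₀ _ (by linarith)⟩
  -- The upper envelope of the diagonal and the broken line through `(e, e)`, `(a, b)`, `(c, c)`.
  let t : ℝ → ℝ := fun s => max s (min (e + k * (s - e)) (c - l * (c - s)))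
  have hmono : StrictMono t := fun x y hxy =>
    max_lt_max hxy (min_lt_min (by nlinarith) (by nlinarith))
  have hle : ∀ s ≤ e, t s = s := fun s hs => max_eq_left (min_le_of_left_le (by nlinarith))
  have hge : ∀ s, c ≤ s → t s = s := fun s hs => max_eq_left (min_le_of_right_le (by nlinarith))
  have hsurj : Function.Surjective t := by
    intro y
    obtain ⟨s, -, hs⟩ := intermediate_value_Icc ((min_le_left y e).trans (le_max_left y c))
      (by fun_prop : Continuous t).continuousOn
      ⟨(hle _ (min_le_right y e)).trans_le (min_le_left y e),
        (le_max_left y c).trans_eq (hge _ (le_max_right y c)).symm⟩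
    exact ⟨s, hs⟩
  refine ⟨hmono.orderIsoOfSurjective t hsurj, hle, ?_, hge⟩
  simp only [t, StrictMono.coe_orderIsoOfSurjective, hka, hla, add_sub_cancel, sub_sub_cancel,
    min_self, max_eq_right hab]

theorem exists_homeomorph_image_closedBall_eq {e a b c : ℝ} (he : 0 ≤ e) (hea : e < a)
    (hab : a ≤ b) (hbc : b < c) :
    ∃ ρ : E ≃ₜ E, EqOn ρ id (closedBall 0 e) ∧ ρ '' closedBall 0 a = closedBall 0 b ∧
      EqOn ρ id (closedBall 0 c)ᶜ := by
  obtain ⟨t, hle, hta, hge⟩ := exists_orderIso_apply_eq_of_le hea hab hbc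
  have ht0 : t 0 = 0 := hle he
  have hnorm : ∀ x : E, ‖radialHomeomorph t ht0 x‖ = t ‖x‖ := fun x =>
    (norm_radialMap ht0).trans (abs_of_nonneg (ht0 ▸ t.monotone (norm_nonneg x)))
  refine ⟨radialHomeomorph t ht0, fun x hx => ?_, ?_, fun x hx => ?_⟩
  · exact radialMap_eq_self (hle (mem_closedBall_zero_iff.1 hx))
  · rw [← (radialHomeomorph t ht0).preimage_symm, Homeomorph.preimage_symm,
      Homeomorph.image_eq_preimage_symm]
    ext x
    rw [mem_preimage, mem_closedBall_zero_iff, mem_closedBall_zero_iff, ← hta, ← t.le_iff_le,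
      ← hnorm, Homeomorph.apply_symm_apply]
  · rw [mem_compl_iff, mem_closedBall_zero_iff, not_le] at hx
    exact radialMap_eq_self (hge hx.le)

end Radial

section Extension

theorem eqOn_extend_comp_id_compl {X Y : Type*} {g : Y → X} {K : Set Y}
    (hg : Function.Injective g) {ρ : Y → Y} (hρ : EqOn ρ id Kᶜ) :
    EqOn (Function.extend g (g ∘ ρ) id) id (g '' K)ᶜ := by
  intro y hy
  by_cases hyg : ∃ x, g x = y
  · obtain ⟨x, rfl⟩ := hyg
    rw [hg.extend_apply, Function.comp_apply, hρ fun hx => hy ⟨x, hx, rfl⟩, id, id]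
  · exact Function.extend_apply' _ _ _ hyg

variable {X Y : Type*} [TopologicalSpace X] [T2Space X] [TopologicalSpace Y]
  {g : Y → X} {K : Set Y}

theorem continuous_extend_comp_of_eqOn_id_compl (hg : IsOpenEmbedding g) (hK : IsCompact K)
    {ρ : Y → Y} (hρ : Continuous ρ) (hid : EqOn ρ id Kᶜ) :
    Continuous (Function.extend g (g ∘ ρ) id) := by
  refine continuous_iff_continuousAt.2 fun y => ?_
  by_cases hy : y ∈ g '' K
  · obtain ⟨x, -, rfl⟩ := hy
    rw [← hg.continuousAt_iff, Function.extend_comp hg.injective]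
    exact (hg.continuous.comp hρ).continuousAt
  · have hext := eqOn_extend_comp_id_compl hg.injective hid
    exact continuousAt_id.congr (hext.symm.eventuallyEq_of_mem
      ((hK.image hg.continuous).isClosed.isOpen_compl.mem_nhds hy))

theorem exists_homeomorph_comp_eq_comp (hg : IsOpenEmbedding g) (hK : IsCompact K) {ρ : Y ≃ₜ Y}
    (hρ : EqOn ρ id Kᶜ) : ∃ Φ : X ≃ₜ X, Φ ∘ g = g ∘ ρ ∧ EqOn Φ id (g '' K)ᶜ := by
  have hρ' : EqOn ρ.symm id Kᶜ := fun x hx => ρ.symm_apply_eq.2 (hρ hx).symm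
  have hinv : ∀ ρ : Y ≃ₜ Y, Function.LeftInverse (Function.extend g (g ∘ ρ.symm) id)
      (Function.extend g (g ∘ ρ) id) := by
    intro ρ y
    by_cases hy : ∃ x, g x = y
    · obtain ⟨x, rfl⟩ := hy
      simp only [hg.injective.extend_apply, Function.comp_apply, ρ.symm_apply_apply]
    · simp only [Function.extend_apply' _ _ _ hy, id]
  exact ⟨⟨⟨_, _, hinv ρ, hinv ρ.symm⟩,
    continuous_extend_comp_of_eqOn_id_compl hg hK ρ.continuous hρ,
    continuous_extend_comp_of_eqOn_id_compl hg hK ρ.symm.continuous hρ'⟩,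
    Function.extend_comp hg.injective _ _, eqOn_extend_comp_id_compl hg.injective hρ⟩

end Extension

section Engulfing

variable {E : Type*} [NormedAddCommGroup E] [NormedSpace ℝ E] [ProperSpace E]
  {X : Type*} [TopologicalSpace X] [T2Space X]

theorem exists_homeomorph_image_image_closedBall_eq {g : E → X} (hg : IsOpenEmbedding g)
    {e a b c : ℝ} (he : 0 ≤ e) (hea : e < a) (hab : a ≤ b) (hbc : b < c) :
    ∃ Φ : X ≃ₜ X, EqOn Φ id (g '' closedBall 0 e) ∧
      Φ '' (g '' closedBall 0 a) = g '' closedBall 0 b ∧ EqOn Φ id (g '' closedBall 0 c)ᶜ := by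
  obtain ⟨ρ, hρe, hρa, hρc⟩ := exists_homeomorph_image_closedBall_eq (E := E) he hea hab hbc
  obtain ⟨Φ, hΦ, hΦc⟩ := exists_homeomorph_comp_eq_comp hg (isCompact_closedBall 0 c) hρc
  refine ⟨Φ, ?_, ?_, hΦc⟩
  · rintro _ ⟨x, hx, rfl⟩
    exact (congrFun hΦ x).trans (congrArg g (hρe hx))
  · rw [← image_comp, hΦ, image_comp, hρa]

theorem exists_homeomorph_subset_image_of_mem_nhds {h : E → X} (hh : IsOpenEmbedding h) {p : X}
    (hp : p ∈ range h) {K V : Set X} (hK : IsCompact K) (hKh : K ⊆ range h) (hV : V ∈ 𝓝 p) :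
    ∃ φ : X ≃ₜ X, K ⊆ φ '' V ∧ φ =ᶠ[𝓝 p] id := by
  obtain ⟨z, rfl⟩ := hp
  let f : E → X := h ∘ Homeomorph.addRight z
  have hf : IsOpenEmbedding f := hh.comp (Homeomorph.addRight z).isOpenEmbedding
  have hf0 : f 0 = h z := by simp [f]
  have hfrange : range f = range h := (Homeomorph.addRight z).surjective.range_comp h
  rw [← hf0] at hV ⊢
  obtain ⟨η, hη, hηV⟩ := nhds_basis_closedBall.mem_iff.1
    (hf.continuous.continuousAt.preimage_mem_nhds hV)
  obtain ⟨R, hR, hKR⟩ := ((hf.isInducing.isCompact_preimage' hK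
    (hfrange ▸ hKh)).isBounded).subset_closedBall_lt η 0
  obtain ⟨φ, hid, himage, -⟩ := exists_homeomorph_image_image_closedBall_eq hf
    (half_pos hη).le (half_lt_self hη) hR.le (lt_add_one R)
  refine ⟨φ, ?_, hid.eventuallyEq_of_mem
    (hf.isOpenMap.image_mem_nhds (closedBall_mem_nhds 0 (half_pos hη)))⟩
  calc K = f '' (f ⁻¹' K) := (image_preimage_eq_of_subset (hfrange ▸ hKh)).symm
    _ ⊆ f '' closedBall 0 R := image_mono hKR
    _ = φ '' (f '' closedBall 0 η) := himage.symm
    _ ⊆ φ '' V := image_mono (image_subset_iff.2 hηV)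

-- Engulf `K` from a small neighbourhood of `g 0`, after conjugating by a homeomorphism that
-- expands a small ball about `g 0`, on which nothing moves, to `g '' closedBall 0 r`.
theorem exists_homeomorph_eqOn_comp_subset_image {g h : E → X} (hg : IsOpenEmbedding g)
    (hh : IsOpenEmbedding h) {r s : ℝ} (hr : 0 < r) (hrs : r < s) {K : Set X} (hK : IsCompact K)
    (hgh : g '' closedBall 0 s ⊆ range h) (hKh : K ⊆ range h) :
    ∃ Φ : X ≃ₜ X, EqOn (Φ ∘ g) g (closedBall 0 r) ∧ K ⊆ (Φ ∘ g) '' closedBall 0 s := by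
  set A := g '' closedBall 0 s
  have hA : A ∈ 𝓝 (g 0) := hg.isOpenMap.image_mem_nhds (closedBall_mem_nhds 0 (hr.trans hrs))
  obtain ⟨φ, hengulf, hφ⟩ := exists_homeomorph_subset_image_of_mem_nhds hh
    (hgh (mem_of_mem_nhds hA)) (((isCompact_closedBall 0 s).image hg.continuous).union hK)
    (union_subset hgh hKh) hA
  obtain ⟨δ, hδ, hδφ⟩ := nhds_basis_closedBall.mem_iff.1
    (hg.continuous.continuousAt.eventually hφ)
  obtain ⟨Ψ, -, hexpand, hΨ⟩ := exists_homeomorph_image_image_closedBall_eq hg le_rfl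
    (lt_min hδ hr) (min_le_right δ r) hrs
  have hΨA : Ψ '' A = A := image_eq_of_bijective_of_eqOn_id_compl Ψ.bijective hΨ
  refine ⟨(Ψ.symm.trans φ).trans Ψ, fun x hx => ?_, ?_⟩
  · obtain ⟨_, ⟨y, hy, rfl⟩, hyx⟩ := hexpand.symm.subset (mem_image_of_mem g hx)
    have hφy : φ (g y) = g y := hδφ (closedBall_subset_closedBall (min_le_left δ r) hy)
    simp only [Function.comp_apply, Homeomorph.trans_apply, ← hyx, Ψ.symm_apply_apply, hφy]
  · calc K ⊆ Ψ '' (A ∪ K) := fun y hy => by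
          by_cases hyA : y ∈ A
          · exact image_mono subset_union_left (hΨA.symm ▸ hyA)
          · exact ⟨y, .inr hy, hΨ hyA⟩
      _ ⊆ Ψ '' (φ '' A) := image_mono hengulf
      _ = Ψ '' (φ '' (Ψ.symm '' A)) := by
          conv_rhs => rw [← hΨA, ← image_comp Ψ.symm, Ψ.symm_comp_self, image_id]
      _ = (((Ψ.symm.trans φ).trans Ψ) ∘ g) '' closedBall 0 s := by
          simp only [A, image_image]; rfl

end Engulfing

theorem exists_isOpenEmbedding_eqOn_of_eqOn_succ {X Y : Type*} [TopologicalSpace X]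
    [TopologicalSpace Y] {g : ℕ → Y → X} {S : ℕ → Set Y} (hg : ∀ k, IsOpenEmbedding (g k))
    (hS : Monotone S) (hcover : ∀ x, ∃ k, S k ∈ 𝓝 x) (hstab : ∀ k, EqOn (g (k + 1)) (g k) (S k)) :
    ∃ G : Y → X, IsOpenEmbedding G ∧ ∀ k, EqOn G (g k) (S k) := by
  have hle : ∀ {k l}, k ≤ l → EqOn (g l) (g k) (S k) := fun {k l} hkl => by
    induction l, hkl using Nat.le_induction with
    | base => exact eqOn_refl _ _
    | succ l hkl ih => exact ((hstab l).mono (hS hkl)).trans ih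
  choose m hm using hcover
  let G : Y → X := fun x => g (m x) x
  have hG : ∀ k, EqOn G (g k) (S k) := fun k x hx => (le_total k (m x)).elim
    (fun h => hle h hx) fun h => (hle h (mem_of_mem_nhds (hm x))).symm
  have hlocal : ∀ x, G =ᶠ[𝓝 x] g (m x) := fun x => (hG (m x)).eventuallyEq_of_mem (hm x)
  refine ⟨G, .of_continuous_injective_isOpenMap ?_ ?_ ?_, hG⟩
  · exact continuous_iff_continuousAt.2 fun x =>
      (hg (m x)).continuous.continuousAt.congr (hlocal x).symm
  · intro x y hxy
    have hx := hS (le_max_left (m x) (m y)) (mem_of_mem_nhds (hm x))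
    have hy := hS (le_max_right (m x) (m y)) (mem_of_mem_nhds (hm y))
    exact (hg _).injective ((hG _ hx).symm.trans (hxy.trans (hG _ hy)))
  · refine IsOpenMap.of_nhds_le fun x => ?_
    rw [map_congr (hlocal x), (hlocal x).eq_of_nhds, (hg (m x)).map_nhds_eq]

theorem t2Space_of_forall_pair_mem_range {X Y : Type*} [TopologicalSpace X] [TopologicalSpace Y]
    [T2Space Y] (hpair : ∀ x y : X, ∃ h : Y → X, IsOpenEmbedding h ∧ x ∈ range h ∧ y ∈ range h) :
    T2Space X := by
  refine ⟨fun x y hxy => ?_⟩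
  obtain ⟨h, hh, ⟨a, rfl⟩, ⟨b, rfl⟩⟩ := hpair x y
  obtain ⟨U, V, hU, hV, ha, hb, hUV⟩ := t2_separation (ne_of_apply_ne h hxy)
  exact ⟨h '' U, h '' V, hh.isOpenMap U hU, hh.isOpenMap V hV, mem_image_of_mem h ha,
    mem_image_of_mem h hb, (disjoint_image_iff hh.injective).2 hUV⟩

theorem nonempty_homeomorph_of_forall_isCompact_subset_range {E : Type*} [NormedAddCommGroup E]
    [NormedSpace ℝ E] [ProperSpace E] {X : Type*} [TopologicalSpace X] [SigmaCompactSpace X]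
    (hcell : ∀ K : Set X, IsCompact K → ∃ h : E → X, IsOpenEmbedding h ∧ K ⊆ range h) :
    Nonempty (X ≃ₜ E) := by
  have : T2Space X := t2Space_of_forall_pair_mem_range (Y := E) fun x y => by
    simpa only [insert_subset_iff, singleton_subset_iff] using
      hcell {x, y} (toFinite _).isCompact
  have hstep : ∀ (k : ℕ) (g : {g : E → X // IsOpenEmbedding g}),
      ∃ g' : {g : E → X // IsOpenEmbedding g}, EqOn g'.1 g.1 (closedBall 0 (k + 1)) ∧
        compactCovering X k ⊆ g'.1 '' closedBall 0 (k + 1 + 1) := by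
    rintro k ⟨g, hg⟩
    have hK := isCompact_compactCovering X k
    obtain ⟨h, hh, hsub⟩ := hcell _
      (((isCompact_closedBall 0 (k + 1 + 1 : ℝ)).image hg.continuous).union hK)
    obtain ⟨Φ, hΦ⟩ := exists_homeomorph_eqOn_comp_subset_image hg hh k.cast_add_one_pos
      (lt_add_one _) hK (subset_union_left.trans hsub) (subset_union_right.trans hsub)
    exact ⟨⟨Φ ∘ g, Φ.isOpenEmbedding.comp hg⟩, hΦ⟩
  choose next hnext hcover using hstep
  obtain ⟨g₀, hg₀, -⟩ := hcell ∅ isCompact_empty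
  let g : ℕ → {g : E → X // IsOpenEmbedding g} := fun k => Nat.rec ⟨g₀, hg₀⟩ next k
  obtain ⟨G, hG, hGg⟩ := exists_isOpenEmbedding_eqOn_of_eqOn_succ
    (S := fun k : ℕ => closedBall (0 : E) (k + 1)) (fun k => (g k).2)
    (fun k l hkl => closedBall_subset_closedBall (by gcongr))
    (fun x => (exists_nat_gt ‖x‖).imp fun k hk => closedBall_mem_nhds_of_mem
      (mem_ball_zero_iff.2 (hk.trans (lt_add_one _))))
    fun k => hnext k (g k)
  refine ⟨(hG.isEmbedding.toHomeomorphOfSurjective fun x => ?_).symm⟩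
  obtain ⟨k, hk⟩ := exists_mem_compactCovering x
  obtain ⟨y, hy, hyx⟩ := hcover k (g k) hk
  exact ⟨y, (hGg (k + 1) (by simpa using hy)).trans hyx⟩

end MonotoneUnion

section NestedBalls

open Set Topology

/-- The charted space structure on `M` whose charts are the inverses of chosen homeomorphisms of
open neighbourhoods with the model space `H`. -/
noncomputable abbrev chartedSpaceOfHomeomorphNhds {H M : Type*} [TopologicalSpace H] [Nonempty H]
    [TopologicalSpace M] (hM : ∀ x : M, ∃ U : Set M, x ∈ U ∧ IsOpen U ∧ Nonempty (U ≃ₜ H)) :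
    ChartedSpace H M := by
  choose U hxU hU κ using hM
  let chart (x : M) : OpenPartialHomeomorph M H :=
    (((hU x).isOpenEmbedding_subtypeVal.comp
      (κ x).some.symm.isOpenEmbedding).toOpenPartialHomeomorph _).symm
  exact
    { atlas := range chart
      chartAt := chart
      mem_chart_source x := by
        have hx : x ∈ Subtype.val '' range (κ x).some.symm := by simpa using hxU x
        simpa [chart, range_comp] using hx
      chart_mem_atlas := mem_range_self }

variable {E : Type*} [NormedAddCommGroup E] [NormedSpace ℝ E] [FiniteDimensional ℝ E]
  {M : Type*} [TopologicalSpace M] [ChartedSpace E M] {B : ℕ → Set M}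

theorem exists_isOpenEmbedding_iUnion_subset_range
    (hB : ∀ i, Nonempty (B i ≃ₜ Metric.closedBall (0 : E) 1))
    (hnest : ∀ i, B i ⊆ interior (B (i + 1))) {K : Set (⋃ i, B i)} (hK : IsCompact K) :
    ∃ h : E → ⋃ i, B i, IsOpenEmbedding h ∧ K ⊆ range h := by
  have hmono : Monotone B := monotone_nat_of_le_succ fun i => (hnest i).trans interior_subset
  obtain ⟨i, hi⟩ := (hK.image continuous_subtype_val).elim_directed_cover (fun i => interior (B i))
    (fun _ => isOpen_interior)
    ((Subtype.coe_image_subset _ K).trans (iUnion_subset fun i =>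
      (hnest i).trans (subset_iUnion (fun i => interior (B i)) (i + 1))))
    (Monotone.directed_le fun _ _ hij => interior_mono (hmono hij))
  obtain ⟨h, hh, hrange⟩ := exists_isOpenEmbedding_range_eq_interior E (hB i).some
  have hmem : ∀ y, h y ∈ ⋃ i, B i := fun y =>
    mem_iUnion_of_mem i (interior_subset (hrange ▸ mem_range_self y))
  refine ⟨codRestrict h _ hmem, ⟨hh.isEmbedding.codRestrict _ hmem, ?_⟩, fun x hx => ?_⟩
  · rw [range_codRestrict]
    exact hh.isOpen_range.preimage continuous_subtype_val
  · obtain ⟨y, hy⟩ := hrange.symm.subset (hi (mem_image_of_mem _ hx))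
    exact ⟨y, Subtype.ext hy⟩

theorem nested_union_of_balls_is_open_cell_general
    (hB : ∀ i, Nonempty (B i ≃ₜ Metric.closedBall (0 : E) 1))
    (hnest : ∀ i, B i ⊆ interior (B (i + 1))) : Nonempty (↥(⋃ i, B i) ≃ₜ E) := by
  have : CompactSpace (Metric.closedBall (0 : E) 1) :=
    isCompact_iff_compactSpace.1 (isCompact_closedBall 0 1)
  have hcompact : ∀ i, IsCompact (B i) := fun i =>
    isCompact_iff_compactSpace.2 (hB i).some.symm.compactSpace
  have : SigmaCompactSpace (⋃ i, B i) :=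
    isSigmaCompact_iff_sigmaCompactSpace.1 (isSigmaCompact_iUnion_of_isCompact B hcompact)
  exact nonempty_homeomorph_of_forall_isCompact_subset_range fun _ =>
    exists_isOpenEmbedding_iUnion_subset_range hB hnest

end NestedBalls

/-- Lemma 5.1.9: in an `n`-manifold, a union of closed `n`-balls `B 0 ⊆ int B 1 ⊆ B 1 ⊆ …`,
each contained in the topological interior of the next, is an open `n`-cell. -/
theorem nested_union_of_balls_is_open_cell (n : ℕ) (hn : 1 ≤ n)
    (M : Type) [TopologicalSpace M] [T2Space M]
    (hM : ∀ x : M, ∃ U : Set M, x ∈ U ∧ IsOpen U ∧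
      Nonempty (↥U ≃ₜ EuclideanSpace ℝ (Fin n)))
    (B : ℕ → Set M)
    (hB : ∀ i, Nonempty (↥(B i) ≃ₜ ↥(Metric.closedBall (0 : EuclideanSpace ℝ (Fin n)) 1)))
    (hnest : ∀ i, B i ⊆ interior (B (i + 1))) :
    Nonempty (↥(⋃ i, B i) ≃ₜ EuclideanSpace ℝ (Fin n)) := by
  let _ : ChartedSpace (EuclideanSpace ℝ (Fin n)) M := chartedSpaceOfHomeomorphNhds hM
  exact nested_union_of_balls_is_open_cell_general hB hnest
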